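/- arXiv:1111.6922 — 6 statements merged into one kernel-verified Lean document; each statement's English description precedes it below -/
import Mathlib

section
/- For all natural numbers n, c and all codes x, y : Fin n → Fin c, β(x, y) = Σ_{j : Fin c} min(|{i : x i = j}|, |{i : y i = j}|), where the cardinalities are of finite sets of indices. -/
/-!
Counted color by color, the agreements of `x` and `y ∘ σ` of color `j` form the intersection of the
color class of `x` with that of `y ∘ σ`, which has the size of the class of `y`; this gives the
upper bound by the sum of minima. Conversely, take `σ` maximizing the number of agreements. If, for
some color `j`, neither color class contained the other, `alphaCount_lt_swap` would produce a better
permutation by one transposition. So the two classes are nested for every color, and each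
intersection has size exactly the minimum.
-/

/-- `alphaCount x y` is the number of positions at which the codes `x` and `y` agree. -/
def alphaCount {P K : Type*} [Fintype P] [DecidableEq K] (x y : P → K) : ℕ :=
  (Finset.univ.filter fun i => x i = y i).card

/-- `betaCount x y` is the maximum of `alphaCount x (y ∘ σ)` over all permutations `σ`. -/
def betaCount {P K : Type*} [Fintype P] [DecidableEq P] [DecidableEq K] (x y : P → K) : ℕ :=
  Finset.univ.sup fun σ : Equiv.Perm P => alphaCount x (y ∘ σ)

/-- The agreements of `x` and `z` are counted color by color. -/
theorem alphaCount_eq_sum {n c : ℕ} (x z : Fin n → Fin c) :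
    alphaCount x z =
      ∑ j : Fin c, (Finset.univ.filter fun i => x i = j ∧ z i = j).card := by
  unfold alphaCount
  rw [Finset.card_eq_sum_card_fiberwise (f := x) (t := Finset.univ) (by simp)]
  refine Finset.sum_congr rfl fun j _ => ?_
  congr 1
  ext i
  simp only [Finset.mem_filter, Finset.mem_univ, true_and]
  grind

theorem card_filter_comp_perm {n c : ℕ} (y : Fin n → Fin c) (σ : Equiv.Perm (Fin n))
    (j : Fin c) :
    (Finset.univ.filter fun i => (y ∘ σ) i = j).card =
      (Finset.univ.filter fun i => y i = j).card :=
  Finset.card_equiv σ (by simp)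

/-- The exchange step: if position `i` of `x` has color `j` and position `k` of `z` has color `j`,
both unmatched, then swapping the entries `i` and `k` of `z` gains an agreement at `i` and loses
none. -/
theorem alphaCount_lt_swap {n c : ℕ} (x z : Fin n → Fin c) (j : Fin c) (i k : Fin n)
    (hxi : x i = j) (hzi : z i ≠ j) (hzk : z k = j) (hxk : x k ≠ j) :
    alphaCount x z < alphaCount x (z ∘ Equiv.swap i k) := by
  unfold alphaCount
  apply Finset.card_lt_card
  rw [Finset.ssubset_iff_of_subset]
  · exact ⟨i, by simp [hxi, hzk], by simpa [hxi] using hzi.symm⟩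
  · intro l hl
    simp only [Finset.mem_filter, Finset.mem_univ, true_and, Function.comp_apply] at hl ⊢
    -- An agreement position is neither `i` nor `k`, so the swap leaves it alone.
    have hli : l ≠ i := by rintro rfl; exact hzi (hl ▸ hxi)
    have hlk : l ≠ k := by rintro rfl; exact hxk (hl.trans hzk)
    rw [Equiv.swap_apply_of_ne_of_ne hli hlk, hl]

theorem beta_eq_sum_min (n c : ℕ) (x y : Fin n → Fin c) :
    betaCount x y =
      ∑ j : Fin c,
        min (Finset.univ.filter fun i => x i = j).card
            (Finset.univ.filter fun i => y i = j).card := by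
  apply le_antisymm
  · refine Finset.sup_le fun σ _ => ?_
    rw [alphaCount_eq_sum]
    refine Finset.sum_le_sum fun j _ => ?_
    rw [← card_filter_comp_perm y σ j]
    exact le_min (Finset.card_le_card fun i => by simp +contextual)
      (Finset.card_le_card fun i => by simp +contextual)
  · obtain ⟨σ, -, hσ⟩ := Finset.exists_max_image (Finset.univ : Finset (Equiv.Perm (Fin n)))
      (fun σ => alphaCount x (y ∘ σ)) ⟨1, Finset.mem_univ _⟩
    refine le_trans ?_ (Finset.le_sup (f := fun σ : Equiv.Perm (Fin n) => alphaCount x (y ∘ σ))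
      (Finset.mem_univ σ))
    simp only [alphaCount_eq_sum x (y ∘ σ)]
    refine Finset.sum_le_sum fun j _ => ?_
    rw [← card_filter_comp_perm y σ j]
    by_cases h : ∀ i, x i = j → (y ∘ σ) i = j
    · refine (min_le_left _ _).trans (Finset.card_le_card fun i hi => ?_)
      simp only [Finset.mem_filter, Finset.mem_univ, true_and] at hi ⊢
      exact ⟨hi, h i hi⟩
    · push Not at h
      obtain ⟨i, hxi, hyi⟩ := h
      refine (min_le_right _ _).trans (Finset.card_le_card fun k hk => ?_)
      simp only [Finset.mem_filter, Finset.mem_univ, true_and] at hk ⊢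
      refine ⟨?_, hk⟩
      by_contra hxk
      have hlt := alphaCount_lt_swap x (y ∘ σ) j i k hxi hyi hk hxk
      -- `(y ∘ σ) ∘ swap i k` is definitionally `y ∘ (σ * swap i k)`.
      exact absurd (hσ (σ * Equiv.swap i k) (Finset.mem_univ _)) (not_le.mpr hlt)
end

section
/- For all natural numbers n, c and all codes x, y, z : Fin n → Fin c, β(x, y) + β(y, z) ≤ n + β(x, z); equivalently, the function (x, y) ↦ n − β(x, y) satisfies the triangle inequality on the code space, so it is a distance function on codes considered up to reordering of their entries. -/
theorem alphaCount_triangle {P K : Type*} [Fintype P] [DecidableEq P] [DecidableEq K]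
    (x y z : P → K) :
    alphaCount x y + alphaCount y z ≤ Fintype.card P + alphaCount x z := by
  unfold alphaCount
  rw [← Finset.card_union_add_card_inter]
  refine add_le_add (Finset.card_le_univ _) (Finset.card_le_card fun i hi => ?_)
  simp only [Finset.mem_inter, Finset.mem_filter, Finset.mem_univ, true_and] at hi ⊢
  exact hi.1.trans hi.2

theorem alphaCount_comp_perm {P K : Type*} [Fintype P] [DecidableEq K]
    (x y : P → K) (σ : Equiv.Perm P) : alphaCount (x ∘ σ) (y ∘ σ) = alphaCount x y :=
  Finset.card_equiv σ (by simp)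

theorem exists_betaCount_eq {P K : Type*} [Fintype P] [DecidableEq P] [DecidableEq K]
    (x y : P → K) : ∃ σ : Equiv.Perm P, betaCount x y = alphaCount x (y ∘ σ) := by
  obtain ⟨σ, -, h⟩ := Finset.exists_mem_eq_sup Finset.univ Finset.univ_nonempty
    fun σ : Equiv.Perm P => alphaCount x (y ∘ σ)
  exact ⟨σ, h⟩

theorem alphaCount_le_betaCount {P K : Type*} [Fintype P] [DecidableEq P] [DecidableEq K]
    (x y : P → K) (σ : Equiv.Perm P) : alphaCount x (y ∘ σ) ≤ betaCount x y :=
  Finset.le_sup (f := fun σ : Equiv.Perm P => alphaCount x (y ∘ σ)) (Finset.mem_univ σ)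

theorem beta_triangle (n c : ℕ) (x y z : Fin n → Fin c) :
    betaCount x y + betaCount y z ≤ n + betaCount x z := by
  obtain ⟨σ, hσ⟩ := exists_betaCount_eq x y
  obtain ⟨τ, hτ⟩ := exists_betaCount_eq y z
  rw [hσ, hτ, ← alphaCount_comp_perm y (z ∘ τ) σ]
  have h := alphaCount_triangle x (y ∘ σ) ((z ∘ τ) ∘ σ)
  rw [Fintype.card_fin] at h
  -- `(z ∘ τ) ∘ σ` is definitionally `z ∘ (τ * σ)`.
  exact h.trans (Nat.add_le_add_left (alphaCount_le_betaCount x z (τ * σ)) n)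
end

section
/- Let n be a natural number and let s, g, g' : Fin n → Fin 2 be binary codes, and let S = {i : g i ≠ g' i} be the set of positions where g and g' differ. Then 2 · |{i ∈ S : g' i = s i}| = |S| + α(s, g') − α(s, g) (as an identity of integers). In words: if altering k bits of a guess increases its black-peg rating against s by r, then exactly (k + r)/2 of the altered bits are set to the value s has there. -/
theorem bit_flip_count (n : ℕ) (s g g' : Fin n → Fin 2) :
    (2 * (((Finset.univ.filter fun i => g i ≠ g' i).filter fun i => g' i = s i).card : ℤ))
      = ((Finset.univ.filter fun i => g i ≠ g' i).card : ℤ)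
          + (alphaCount s g' : ℤ) - (alphaCount s g : ℤ) := by
  -- Every cardinality is a sum of indicators, so the identity can be checked position by position.
  simp only [alphaCount, Finset.filter_filter, Finset.card_filter, Nat.cast_sum, Finset.mul_sum]
  rw [← Finset.sum_add_distrib, ← Finset.sum_sub_distrib]
  refine Finset.sum_congr rfl fun i _ => ?_
  -- At each position only the eight values of the three bits matter.
  generalize s i = a, g i = b, g' i = c
  revert a b c
  decide
end

section
/- Let n ≥ 1 and for each j : Fin n let g_j : Fin (2n) → Fin 2 be the code with value 1 exactly at the two positions 2j and 2j+1, and 0 elsewhere. Then the set of codes s : Fin (2n) → Fin 2 satisfying α(s, (0,…,0)) = n and α(s, g_j) = n for every j has exactly 2^n elements; explicitly, it consists exactly of the codes with s(2j) ≠ s(2j+1) for every j, and s ↦ (j ↦ s(2j)) is a bijection from this set onto Fin n → Fin 2. -/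
/-- The number of agreements of `s` and `t` within the pair of positions `2j`, `2j+1`. -/
def pairAgree {n : ℕ} (s t : Fin (2 * n) → Fin 2) (j : Fin n) : ℕ :=
  (if s ⟨2 * j.val, by omega⟩ = t ⟨2 * j.val, by omega⟩ then 1 else 0) +
    (if s ⟨2 * j.val + 1, by omega⟩ = t ⟨2 * j.val + 1, by omega⟩ then 1 else 0)

lemma alphaCount_eq_sum_s9 {n : ℕ} (s t : Fin (2 * n) → Fin 2) :
    alphaCount s t = ∑ j, pairAgree s t j := by
  unfold alphaCount pairAgree
  rw [Finset.card_filter,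
    ← Equiv.sum_comp (finProdFinEquiv.trans (finCongr (Nat.mul_comm n 2))), Fintype.sum_prod_type]
  refine Finset.sum_congr rfl fun j _ => ?_
  have h0 : (finProdFinEquiv.trans (finCongr (Nat.mul_comm n 2))) (j, (0 : Fin 2)) =
      ⟨2 * j.val, by omega⟩ := by
    ext; simp
  have h1 : (finProdFinEquiv.trans (finCongr (Nat.mul_comm n 2))) (j, (1 : Fin 2)) =
      ⟨2 * j.val + 1, by omega⟩ := by
    ext; simp [Nat.add_comm]
  rw [Fin.sum_univ_two, h0, h1]

lemma pairAgree_zero_eq_one_iff {n : ℕ} (s : Fin (2 * n) → Fin 2) (j : Fin n) :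
    pairAgree s (fun _ => 0) j = 1 ↔
      s ⟨2 * j.val, by omega⟩ ≠ s ⟨2 * j.val + 1, by omega⟩ := by
  unfold pairAgree
  dsimp only
  generalize s ⟨2 * j.val, _⟩ = a
  generalize s ⟨2 * j.val + 1, _⟩ = b
  fin_cases a <;> fin_cases b <;> simp

lemma alphaCount_block {n : ℕ} (s t : Fin (2 * n) → Fin 2) (j : Fin n)
    (ht : ∀ i : Fin (2 * n),
      t i = if i.val = 2 * j.val ∨ i.val = 2 * j.val + 1 then 1 else 0) :
    alphaCount s t + 2 * pairAgree s (fun _ => 0) j = alphaCount s (fun _ => 0) + 2 := by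
  rw [alphaCount_eq_sum_s9, alphaCount_eq_sum_s9, ← Finset.add_sum_erase _ _ (Finset.mem_univ j),
    ← Finset.add_sum_erase _ (pairAgree s fun _ => 0) (Finset.mem_univ j)]
  have hoff : ∑ k ∈ Finset.univ.erase j, pairAgree s t k =
      ∑ k ∈ Finset.univ.erase j, pairAgree s (fun _ => 0) k := by
    refine Finset.sum_congr rfl fun k hk => ?_
    have hkj : k.val ≠ j.val := fun h => (Finset.mem_erase.mp hk).1 (Fin.ext h)
    unfold pairAgree
    have h0 : t ⟨2 * k.val, by omega⟩ = 0 := by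
      rw [ht]
      exact if_neg (by dsimp only; omega)
    have h1 : t ⟨2 * k.val + 1, by omega⟩ = 0 := by
      rw [ht]
      exact if_neg (by dsimp only; omega)
    rw [h0, h1]
  have hon : pairAgree s t j + pairAgree s (fun _ => 0) j = 2 := by
    unfold pairAgree
    rw [ht, ht, if_pos (Or.inl rfl), if_pos (Or.inr rfl)]
    dsimp only
    generalize s ⟨2 * j.val, _⟩ = a
    generalize s ⟨2 * j.val + 1, _⟩ = b
    fin_cases a <;> fin_cases b <;> simp
  omega

theorem variable_encoding_queries (n : ℕ) (hn : 1 ≤ n)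
    (g : Fin n → Fin (2 * n) → Fin 2)
    (hg : ∀ (j : Fin n) (i : Fin (2 * n)),
      g j i = if i.val = 2 * j.val ∨ i.val = 2 * j.val + 1 then 1 else 0) :
    Nat.card {s : Fin (2 * n) → Fin 2 //
        alphaCount s (fun _ => 0) = n ∧ ∀ j : Fin n, alphaCount s (g j) = n} = 2 ^ n ∧
    (∀ s : Fin (2 * n) → Fin 2,
      (alphaCount s (fun _ => 0) = n ∧ ∀ j : Fin n, alphaCount s (g j) = n) ↔
        ∀ j : Fin n, s ⟨2 * j.val, by have := j.isLt; omega⟩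
          ≠ s ⟨2 * j.val + 1, by have := j.isLt; omega⟩) ∧
    Set.BijOn (fun (s : Fin (2 * n) → Fin 2) (j : Fin n) => s ⟨2 * j.val, by have := j.isLt; omega⟩)
      {s : Fin (2 * n) → Fin 2 |
        alphaCount s (fun _ => 0) = n ∧ ∀ j : Fin n, alphaCount s (g j) = n}
      Set.univ := by
  have hiff : ∀ s : Fin (2 * n) → Fin 2,
      (alphaCount s (fun _ => 0) = n ∧ ∀ j : Fin n, alphaCount s (g j) = n) ↔
        ∀ j : Fin n, s ⟨2 * j.val, by have := j.isLt; omega⟩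
          ≠ s ⟨2 * j.val + 1, by have := j.isLt; omega⟩ := by
    intro s
    constructor
    · rintro ⟨h0, h⟩ j
      have hb := alphaCount_block s (g j) j (hg j)
      rw [h0, h j] at hb
      exact (pairAgree_zero_eq_one_iff s j).mp (by omega)
    · intro h
      have h1 : ∀ j, pairAgree s (fun _ => 0) j = 1 := fun j =>
        (pairAgree_zero_eq_one_iff s j).mpr (h j)
      have h0 : alphaCount s (fun _ => 0) = n := by
        rw [alphaCount_eq_sum_s9, Finset.sum_congr rfl fun j _ => h1 j]
        simp
      refine ⟨h0, fun j => ?_⟩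
      have hb := alphaCount_block s (g j) j (hg j)
      rw [h0, h1 j] at hb
      omega
  have hbij : Set.BijOn
      (fun (s : Fin (2 * n) → Fin 2) (j : Fin n) => s ⟨2 * j.val, by have := j.isLt; omega⟩)
      {s : Fin (2 * n) → Fin 2 |
        alphaCount s (fun _ => 0) = n ∧ ∀ j : Fin n, alphaCount s (g j) = n}
      Set.univ := by
    refine ⟨fun _ _ => Set.mem_univ _, ?_, ?_⟩
    · intro s hs t ht hst
      have hs' := (hiff s).mp hs
      have ht' := (hiff t).mp ht
      funext i
      have hi := i.isLt
      have he := congrFun hst ⟨i.val / 2, by omega⟩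
      have hsj := hs' ⟨i.val / 2, by omega⟩
      have htj := ht' ⟨i.val / 2, by omega⟩
      dsimp only at he hsj htj
      rcases Nat.mod_two_eq_zero_or_one i.val with hm | hm
      · have hi0 : i = ⟨2 * (i.val / 2), by omega⟩ := Fin.ext (by dsimp only; omega)
        rw [hi0]
        exact he
      · have hi1 : i = ⟨2 * (i.val / 2) + 1, by omega⟩ := Fin.ext (by dsimp only; omega)
        rw [hi1]
        -- Both values differ from the common even-position value, and there are only two colors.
        omega
    · intro f _
      refine ⟨fun i => if i.val % 2 = 0 then f ⟨i.val / 2, by omega⟩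
        else 1 - f ⟨i.val / 2, by omega⟩, (hiff _).mpr fun j => ?_, ?_⟩
      · have hd0 : (2 * j.val) / 2 = j.val := by omega
        have hd1 : (2 * j.val + 1) / 2 = j.val := by omega
        have hm1 : (2 * j.val + 1) % 2 = 1 := by omega
        simp only [hd0, hd1, hm1, Nat.mul_mod_right, if_true, one_ne_zero, if_false]
        generalize f ⟨j.val, _⟩ = a
        revert a
        decide
      · funext j
        have hd0 : (2 * j.val) / 2 = j.val := by omega
        simp only [hd0, Nat.mul_mod_right, if_true]
  refine ⟨?_, hiff, hbij⟩
  refine (Nat.card_congr ((hbij.equiv _).trans (Equiv.Set.univ _))).trans ?_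
  simp
end

section
/- Let φ be a 3-CNF formula with v variables and m clauses in which the three literals of every clause are on pairwise distinct variables, and let n = v + 3m. Then the number of codes s : P → Fin 2 satisfying α(s, g) = r for every query (g, r) in the query set Q(φ) equals the number of truth assignments of the v variables of φ that satisfy φ. -/
/-- A 3-CNF formula with `v` variables and `m` clauses: each clause is three literals,
a literal being a variable index together with a polarity (`true` = positive), and the
three literals of every clause are on pairwise distinct variables. -/
structure CNF3 (v m : ℕ) where
  clause : Fin m → Fin 3 → Fin v × Bool
  distinctVars : ∀ i : Fin m, Function.Injective fun k : Fin 3 => (clause i k).1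

/-- A truth assignment `A` satisfies the formula `φ` when every clause contains a literal
whose variable receives its polarity. -/
def CNF3.Sat {v m : ℕ} (φ : CNF3 v m) (A : Fin v → Bool) : Prop :=
  ∀ i : Fin m, ∃ k : Fin 3, A (φ.clause i k).1 = (φ.clause i k).2

/-- The variables of the Mastermind instance: the `v` original variables plus three fresh
auxiliary variables `a_i = (i,0)`, `b_i = (i,1)`, `c_i = (i,2)` for each clause `C_i`. -/
abbrev MMVar (v m : ℕ) := Fin v ⊕ Fin m × Fin 3

/-- The positions of the single-count black-peg instance: a position `(w, true)` (written `w`)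
and a position `(w, false)` (written `w̄`) for each variable `w`. -/
abbrev MMPos (v m : ℕ) := MMVar v m × Bool

/-- The position `p(ℓ)` associated with a literal `ℓ`. -/
def litPos {v m : ℕ} (ℓ : Fin v × Bool) : MMPos v m := (Sum.inl ℓ.1, ℓ.2)

/-- `chi S` is the binary code equal to `1` on `S` and `0` elsewhere. -/
def chi {P : Type*} [DecidableEq P] (S : Finset P) : P → Fin 2 :=
  fun p => if p ∈ S then 1 else 0

/-- The guess of the type-(3) query for clause `C_i`:
ones exactly at `p(ℓ1), p(ℓ2), p(ℓ3), a_i, b_i`. -/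
def clauseGuess3 {v m : ℕ} (φ : CNF3 v m) (i : Fin m) : MMPos v m → Fin 2 :=
  chi {litPos (φ.clause i 0), litPos (φ.clause i 1), litPos (φ.clause i 2),
        (Sum.inr (i, 0), true), (Sum.inr (i, 1), true)}

/-- The guess of the type-(4) query for clause `C_i`: ones exactly at `ā_i, b_i, c_i`. -/
def clauseGuess4 {v m : ℕ} (i : Fin m) : MMPos v m → Fin 2 :=
  chi {(Sum.inr (i, 0), false), (Sum.inr (i, 1), true), (Sum.inr (i, 2), true)}

/-- `s` is a solution of the single-count black-peg query set `Q(φ)`. -/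
def BlackSol {v m : ℕ} (φ : CNF3 v m) (s : MMPos v m → Fin 2) : Prop :=
  alphaCount s (chi ∅) = v + 3 * m ∧
  (∀ w : MMVar v m, alphaCount s (chi {(w, true), (w, false)}) = v + 3 * m) ∧
  (∀ i : Fin m, alphaCount s (clauseGuess3 φ i) = v + 3 * m + 1) ∧
  (∀ i : Fin m, alphaCount s (clauseGuess4 i) = v + 3 * m + 1)

/-- Moving from the all-zero guess to `χ_S` loses a match at each zero of `s` in `S` and gains
one at each one of `s` in `S`; stated additively to avoid truncated subtraction. -/
lemma alphaCount_chi {P : Type*} [Fintype P] [DecidableEq P] (s : P → Fin 2) (S : Finset P) :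
    alphaCount s (chi S) + S.card = alphaCount s (chi ∅) + 2 * ∑ p ∈ S, (s p).val := by
  have hS : S.card = ∑ p : P, if p ∈ S then 1 else 0 := by simp
  have hv : ∑ p ∈ S, (s p).val = ∑ p : P, if p ∈ S then (s p).val else 0 := by simp
  unfold alphaCount
  rw [hS, hv, Finset.card_filter, Finset.card_filter, Finset.mul_sum, ← Finset.sum_add_distrib,
    ← Finset.sum_add_distrib]
  refine Finset.sum_congr rfl fun p _ => ?_
  generalize hx : s p = x
  by_cases h : p ∈ S <;> fin_cases x <;> simp [chi, h]

lemma alphaCount_empty_of_pairs {v m : ℕ} (s : MMPos v m → Fin 2)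
    (h : ∀ w, (s (w, true)).val + (s (w, false)).val = 1) :
    alphaCount s (chi ∅) = v + 3 * m := by
  unfold alphaCount
  rw [Finset.card_filter, Fintype.sum_prod_type]
  have key : ∀ w : MMVar v m,
      (∑ b : Bool, if s (w, b) = chi ∅ (w, b) then 1 else 0) = 1 := by
    intro w
    have hw := h w
    revert hw
    rw [Fintype.sum_bool]
    generalize s (w, true) = x
    generalize s (w, false) = y
    fin_cases x <;> fin_cases y <;> simp [chi]
  rw [Finset.sum_congr rfl fun w _ => key w]
  simp [mul_comm]

/-- The query set in terms of numbers of ones. The distinctness of the variables of a clause is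
what makes the set of the third kind of query have five elements. -/
lemma blackSol_iff {v m : ℕ} (φ : CNF3 v m) (s : MMPos v m → Fin 2) :
    BlackSol φ s ↔
      (∀ w, (s (w, true)).val + (s (w, false)).val = 1) ∧
      (∀ i, ((s (litPos (φ.clause i 0))).val + (s (litPos (φ.clause i 1))).val
        + (s (litPos (φ.clause i 2))).val) + (s (Sum.inr (i, 0), true)).val
        + (s (Sum.inr (i, 1), true)).val = 3) ∧
      (∀ i, (s (Sum.inr (i, 0), false)).val + (s (Sum.inr (i, 1), true)).val
        + (s (Sum.inr (i, 2), true)).val = 2) := by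
  have h2 : ∀ w : MMVar v m, alphaCount s (chi {(w, true), (w, false)}) + 2
      = alphaCount s (chi ∅) + 2 * ((s (w, true)).val + (s (w, false)).val) := by
    intro w
    have := alphaCount_chi s {(w, true), (w, false)}
    rwa [Finset.card_pair (by simp), Finset.sum_pair (by simp)] at this
  have h3 : ∀ i, alphaCount s (clauseGuess3 φ i) + 5 = alphaCount s (chi ∅) + 2 *
      (((s (litPos (φ.clause i 0))).val + (s (litPos (φ.clause i 1))).val
        + (s (litPos (φ.clause i 2))).val) + (s (Sum.inr (i, 0), true)).val
        + (s (Sum.inr (i, 1), true)).val) := by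
    intro i
    have d01 : (φ.clause i 0).1 ≠ (φ.clause i 1).1 := (φ.distinctVars i).ne (by decide)
    have d02 : (φ.clause i 0).1 ≠ (φ.clause i 2).1 := (φ.distinctVars i).ne (by decide)
    have d12 : (φ.clause i 1).1 ≠ (φ.clause i 2).1 := (φ.distinctVars i).ne (by decide)
    have := alphaCount_chi s {litPos (φ.clause i 0), litPos (φ.clause i 1),
      litPos (φ.clause i 2), (Sum.inr (i, 0), true), (Sum.inr (i, 1), true)}
    rw [Finset.card_insert_of_notMem (by simp [litPos, d01, d02]),
      Finset.card_insert_of_notMem (by simp [litPos, d12]),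
      Finset.card_insert_of_notMem (by simp [litPos]), Finset.card_pair (by simp),
      Finset.sum_insert (by simp [litPos, d01, d02]), Finset.sum_insert (by simp [litPos, d12]),
      Finset.sum_insert (by simp [litPos]), Finset.sum_pair (by simp)] at this
    unfold clauseGuess3
    omega
  have h4 : ∀ i, alphaCount s (clauseGuess4 i) + 3 = alphaCount s (chi ∅) + 2 *
      ((s (Sum.inr (i, 0), false)).val + (s (Sum.inr (i, 1), true)).val
        + (s (Sum.inr (i, 2), true)).val) := by
    intro i
    have := alphaCount_chi s
      {(Sum.inr (i, 0), false), (Sum.inr (i, 1), true), (Sum.inr (i, 2), true)}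
    rw [Finset.card_insert_of_notMem (by simp), Finset.card_pair (by simp),
      Finset.sum_insert (by simp), Finset.sum_pair (by simp)] at this
    unfold clauseGuess4
    omega
  constructor
  · rintro ⟨q1, q2, q3, q4⟩
    refine ⟨fun w => ?_, fun i => ?_, fun i => ?_⟩
    · have := h2 w; have := q2 w; omega
    · have := h3 i; have := q3 i; omega
    · have := h4 i; have := q4 i; omega
  · rintro ⟨q2, q3, q4⟩
    have q1 := alphaCount_empty_of_pairs s q2
    refine ⟨q1, fun w => ?_, fun i => ?_, fun i => ?_⟩
    · have := h2 w; have := q2 w; omega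
    · have := h3 i; have := q3 i; omega
    · have := h4 i; have := q4 i; omega

/-- The symbol at the position of polarity `b` of a variable with truth value `x`. -/
def litBit (x b : Bool) : Fin 2 := if x = b then 1 else 0

/-- The number (0 or 1) telling whether the `k`-th literal of clause `i` is true under `A`. -/
def litVal {v m : ℕ} (φ : CNF3 v m) (A : Fin v → Bool) (i : Fin m) (k : Fin 3) : ℕ :=
  (litBit (A (φ.clause i k).1) (φ.clause i k).2).val

/-- The number of true literals of clause `i` under `A`. -/
def trueLits {v m : ℕ} (φ : CNF3 v m) (A : Fin v → Bool) (i : Fin m) : ℕ :=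
  litVal φ A i 0 + litVal φ A i 1 + litVal φ A i 2

/-- The values of the auxiliary variables `a, b, c` (indices `0, 1, 2`) forced by a clause
with `t ∈ {1, 2, 3}` true literals. -/
def auxVal (t : ℕ) : Fin 3 → Bool :=
  ![decide (t = 1), decide (t ≤ 2), decide (t ≠ 2)]

/-- The extension of `A` to all variables, forced when `A` satisfies `φ`. -/
def extend {v m : ℕ} (φ : CNF3 v m) (A : Fin v → Bool) : MMVar v m → Bool
  | Sum.inl x => A x
  | Sum.inr (i, j) => auxVal (trueLits φ A i) j

/-- The code having its ones at the positions of the literals true under `extend φ A`. -/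
def encode {v m : ℕ} (φ : CNF3 v m) (A : Fin v → Bool) : MMPos v m → Fin 2 :=
  fun p => litBit (extend φ A p.1) p.2

lemma litVal_le_one {v m : ℕ} (φ : CNF3 v m) (A : Fin v → Bool) (i : Fin m) (k : Fin 3) :
    litVal φ A i k ≤ 1 := by
  unfold litVal; omega

lemma trueLits_le {v m : ℕ} (φ : CNF3 v m) (A : Fin v → Bool) (i : Fin m) :
    trueLits φ A i ≤ 3 := by
  have := litVal_le_one φ A i 0
  have := litVal_le_one φ A i 1
  have := litVal_le_one φ A i 2
  unfold trueLits; omega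

lemma sat_iff_trueLits {v m : ℕ} (φ : CNF3 v m) (A : Fin v → Bool) :
    φ.Sat A ↔ ∀ i, 1 ≤ trueLits φ A i := by
  refine forall_congr' fun i => ?_
  rw [Fin.exists_fin_succ, Fin.exists_fin_two]
  unfold trueLits litVal litBit
  change (_ ∨ A (φ.clause i 1).1 = (φ.clause i 1).2 ∨ A (φ.clause i 2).1 = (φ.clause i 2).2) ↔ _
  split_ifs <;> simp_all

lemma blackSol_encode {v m : ℕ} (φ : CNF3 v m) (A : Fin v → Bool) (hA : φ.Sat A) :
    BlackSol φ (encode φ A) := by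
  have hlit : ∀ i k, (encode φ A (litPos (φ.clause i k))).val = litVal φ A i k :=
    fun i k => rfl
  rw [blackSol_iff]
  refine ⟨fun w => ?_, fun i => ?_, fun i => ?_⟩
  · simp only [encode]
    cases extend φ A w <;> rfl
  · have h1 := (sat_iff_trueLits φ A).1 hA i
    have h3 := trueLits_le φ A i
    rw [hlit, hlit, hlit]
    change trueLits φ A i + _ + _ = 3
    simp only [encode, extend]
    generalize trueLits φ A i = t at *
    interval_cases t <;> decide
  · have h1 := (sat_iff_trueLits φ A).1 hA i
    have h3 := trueLits_le φ A i
    simp only [encode, extend]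
    generalize trueLits φ A i = t at *
    interval_cases t <;> decide

/-- The truth assignment of the original variables read off a code. -/
def decodeCode {v m : ℕ} (s : MMPos v m → Fin 2) : Fin v → Bool :=
  fun x => decide (s (Sum.inl x, true) = 1)

/-- A solution is determined by its restriction to the original variables, which satisfies
the formula. -/
lemma sat_and_encode_of_blackSol {v m : ℕ} (φ : CNF3 v m) (s : MMPos v m → Fin 2)
    (hs : BlackSol φ s) : φ.Sat (decodeCode s) ∧ encode φ (decodeCode s) = s := by
  rw [blackSol_iff] at hs
  obtain ⟨h2, h3, h4⟩ := hs
  -- A code satisfying the pair condition is the indicator of the true literals.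
  have pair : ∀ w b, s (w, b) = litBit (decide (s (w, true) = 1)) b := by
    intro w b
    have := h2 w
    revert this
    generalize hx : s (w, true) = x
    generalize hy : s (w, false) = y
    cases b
    · rw [hy]; clear hx hy; revert x y; decide
    · rw [hx]; clear hx hy; revert x y; decide
  have hlit : ∀ i k, (s (litPos (φ.clause i k))).val = litVal φ (decodeCode s) i k := by
    intro i k
    simp only [litPos, litVal, decodeCode]
    rw [pair]
  have h3' : ∀ i, trueLits φ (decodeCode s) i + (s (Sum.inr (i, 0), true)).val
        + (s (Sum.inr (i, 1), true)).val = 3 := by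
    intro i
    have := h3 i
    rwa [hlit, hlit, hlit] at this
  refine ⟨(sat_iff_trueLits _ _).2 fun i => ?_, ?_⟩
  · have := h3' i; omega
  · funext ⟨w, b⟩
    rw [pair w b]
    unfold encode
    suffices h : extend φ (decodeCode s) w = decide (s (w, true) = 1) by simp only [h]
    rcases w with x | ⟨i, j⟩
    · rfl
    · have e3 := h3' i
      have e4 := h4 i
      have e2 := h2 (Sum.inr (i, 0))
      simp only [extend]
      fin_cases j <;>
        simp only [auxVal, Fin.ext_iff, decide_eq_decide, Fin.zero_eta, Fin.mk_one,
          Fin.reduceFinMk, Matrix.cons_val] <;>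
        simp only [Fin.val_one] <;> omega

theorem black_reduction_parsimonious (v m : ℕ) (φ : CNF3 v m) :
    Nat.card {s : MMPos v m → Fin 2 // BlackSol φ s}
      = Nat.card {A : Fin v → Bool // φ.Sat A} := by
  refine Nat.card_congr
    { toFun := fun s => ⟨decodeCode s.1, (sat_and_encode_of_blackSol φ s.1 s.2).1⟩
      invFun := fun A => ⟨encode φ A.1, blackSol_encode φ A.1 A.2⟩
      left_inv := fun s => Subtype.ext (sat_and_encode_of_blackSol φ s.1 s.2).2
      right_inv := fun A => Subtype.ext ?_ }
  funext x
  exact (by decide : ∀ y : Bool, decide (litBit y true = 1) = y) (A.1 x)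
end

section
/- Let n ≥ 5, let K be a finite color set, let p, q, μ ∈ K be pairwise distinct colors, and let g : Fin n → K be a code taking the value p at exactly two positions, the value q at exactly two positions, and the value μ at the remaining n − 4 positions. If a code s : Fin n → K contains no occurrence of the color μ and β(s, g) = 1, then |{i : s i = p}| + |{i : s i = q}| = 1; that is, exactly one of the colors p, q occurs in s, and it occurs exactly once. -/
/-- Two matches between entries of `x` and entries of `y`, at distinct positions on both sides, can be
realized by a single permutation. -/
theorem two_le_betaCount {P K : Type*} [Fintype P] [DecidableEq P] [DecidableEq K]
    {x y : P → K} {a b c d : P} (hab : a ≠ b) (hcd : c ≠ d)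
    (hac : y c = x a) (hbd : y d = x b) : 2 ≤ betaCount x y := by
  let τ : Equiv.Perm P := Equiv.swap a c
  let σ : Equiv.Perm P := Equiv.swap (τ b) d * τ
  have hτa : τ a = c := Equiv.swap_apply_left a c
  have hσa : σ a = c := by
    have h : c ≠ τ b := fun h => hab (τ.injective (hτa.trans h))
    simp only [σ, Equiv.Perm.mul_apply, hτa]
    exact Equiv.swap_apply_of_ne_of_ne h hcd
  have hσb : σ b = d := by
    simp only [σ, Equiv.Perm.mul_apply]
    exact Equiv.swap_apply_left _ _
  have h2 : 2 ≤ alphaCount x (y ∘ σ) := by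
    rw [← Finset.card_pair hab]
    apply Finset.card_le_card
    intro i hi
    rcases Finset.mem_insert.1 hi with rfl | hi
    · simp [hσa, hac]
    · obtain rfl := Finset.mem_singleton.1 hi
      simp [hσb, hbd]
  exact h2.trans
    (Finset.le_sup (f := fun σ : Equiv.Perm P => alphaCount x (y ∘ σ)) (Finset.mem_univ σ))

theorem variable_forcing (n : ℕ) (hn : 5 ≤ n) (K : Type*) [Fintype K] [DecidableEq K]
    (p q μ : K) (hpq : p ≠ q) (hpμ : p ≠ μ) (hqμ : q ≠ μ)
    (g : Fin n → K)
    (hgp : (Finset.univ.filter fun i => g i = p).card = 2)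
    (hgq : (Finset.univ.filter fun i => g i = q).card = 2)
    (hgμ : (Finset.univ.filter fun i => g i = μ).card = n - 4)
    (s : Fin n → K) (hs : ∀ i, s i ≠ μ) (hβ : betaCount s g = 1) :
    (Finset.univ.filter fun i => s i = p).card
      + (Finset.univ.filter fun i => s i = q).card = 1 := by
  have hdisj : ∀ f : Fin n → K, Disjoint (Finset.univ.filter fun i => f i = p)
      (Finset.univ.filter fun i => f i = q) := fun f =>
    Finset.disjoint_filter.2 fun i _ h h' => hpq (h.symm.trans h')
  -- The three color classes of `g` have `2 + 2 + (n - 4) = n` elements, so they exhaust `Fin n`.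
  have hg : ∀ i, (g i = p ∨ g i = q) ∨ g i = μ := by
    have hd : Disjoint (Finset.univ.filter fun i => g i = p ∨ g i = q)
        (Finset.univ.filter fun i => g i = μ) := by
      refine Finset.disjoint_filter.2 fun i _ h h' => ?_
      rcases h with h | h
      · exact hpμ (h.symm.trans h')
      · exact hqμ (h.symm.trans h')
    have hc := Finset.card_union_of_disjoint hd
    rw [Finset.filter_or, Finset.card_union_of_disjoint (hdisj g), hgp, hgq, hgμ,
      ← Finset.filter_or, ← Finset.filter_or] at hc
    have hu := Finset.eq_univ_of_card _ (hc.trans (by rw [Fintype.card_fin]; omega))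
    intro i
    simpa using hu.ge (Finset.mem_univ i)
  rw [← Finset.card_union_of_disjoint (hdisj s), ← Finset.filter_or]
  apply le_antisymm
  · by_contra! h
    obtain ⟨a, ha, b, hb, hab⟩ := Finset.one_lt_card.1 h
    have key : ∀ i, s i = p ∨ s i = q → 1 < (Finset.univ.filter fun j => g j = s i).card := by
      rintro i (h | h) <;> rw [h] <;> omega
    obtain ⟨c, hc⟩ := Finset.card_pos.1 (zero_lt_one.trans (key a (Finset.mem_filter.1 ha).2))
    obtain ⟨d, hd, hdc⟩ := Finset.exists_mem_ne (key b (Finset.mem_filter.1 hb).2) c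
    have := two_le_betaCount hab hdc.symm (Finset.mem_filter.1 hc).2 (Finset.mem_filter.1 hd).2
    omega
  · obtain ⟨σ, -, hσ⟩ := Finset.exists_mem_eq_sup Finset.univ Finset.univ_nonempty
      fun σ : Equiv.Perm (Fin n) => alphaCount s (g ∘ σ)
    have h1 : alphaCount s (g ∘ σ) = 1 := hσ.symm.trans hβ
    obtain ⟨i, hi⟩ := Finset.card_pos.1 (zero_lt_one.trans_eq h1.symm)
    have hi : s i = g (σ i) := (Finset.mem_filter.1 hi).2
    refine Finset.card_pos.2 ⟨i, Finset.mem_filter.2 ⟨Finset.mem_univ i, ?_⟩⟩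
    have h3 := hg (σ i)
    rw [← hi] at h3
    exact h3.resolve_right (hs i)
end
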